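/- Let x₀ < ⋯ < xₙ and x̂₀ = x₀ < x̂₁ < ⋯ < x̂_{n−1} < x̂ₙ = xₙ satisfy max_{0≤k≤n} Σ_{j≠k} |r_{jk}(x, x̂)| < 0.01 and max_k |x̂_k − x_k| ≤ 0.1·min_{j≠k} |x_j − x_k|. Let f : [x₀, xₙ] → ℝ be Lipschitz with constant L, set y_k := f(x̂_k), and let z_k = z_k(x, x̂). Then for all t ∈ [x₀, xₙ], |E(t; y, z)| ≤ L·ρ(x̂)·‖z‖₁ + Λ(x̂)·‖z‖_∞·‖f − P_y‖_∞, where ρ(x̂) := max_{0≤k≤n} sup_{t ∈ [x₀, xₙ]} |ℓ_k(t)·(t − x̂_k)|, ‖z‖₁ = Σ_k |z_k|, ‖z‖_∞ = max_k |z_k|, and ‖f − P_y‖_∞ = sup_{t ∈ [x₀, xₙ]} |f(t) − P_y(t)|. -/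

import Mathlib

/-- Barycentric weight `λ_k(x) = 1 / ∏_{j ≠ k} (x_k - x_j)`. -/
noncomputable def lam {n : ℕ} (x : Fin (n + 1) → ℝ) (k : Fin (n + 1)) : ℝ :=
  (∏ j ∈ Finset.univ.erase k, (x k - x j))⁻¹

/-- Relative error in the weights `z_k(x, x̂)`. -/
noncomputable def zk {n : ℕ} (x xh : Fin (n + 1) → ℝ) (k : Fin (n + 1)) : ℝ :=
  (lam x k - lam xh k) / lam xh k

/-- Relative error in the node differences `r_{jk}(x, x̂)`. -/
noncomputable def rjk {n : ℕ} (x xh : Fin (n + 1) → ℝ) (j k : Fin (n + 1)) : ℝ :=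
  (xh k - xh j) / (x k - x j) - 1

/-- The Error Polynomial `E(t; y, z) = P_{yz}(t) - P_y(t)·P_z(t)` for nodes `xh`. -/
noncomputable def errP {n : ℕ} (xh y z : Fin (n + 1) → ℝ) (t : ℝ) : ℝ :=
  (Lagrange.interpolate Finset.univ xh (fun k => y k * z k)).eval t -
    (Lagrange.interpolate Finset.univ xh y).eval t *
      (Lagrange.interpolate Finset.univ xh z).eval t

/-- The Lebesgue constant of the node family `v` over the interval `[a, b]`. -/
noncomputable def leb {ι : Type*} [Fintype ι] [DecidableEq ι] (v : ι → ℝ) (a b : ℝ) : ℝ :=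
  ⨆ t : Set.Icc a b, ∑ k, |(Lagrange.basis Finset.univ v k).eval (t : ℝ)|

/-!
For every constant `c`, the Error Polynomial splits as
`E(t) = ∑ ℓ_k(t) (y_k - c) z_k + P_z(t) (c - P_y(t))`. With `c = f(t)` the Lipschitz bound turns
`|ℓ_k(t)| |f(v_k) - f(t)|` into `L |ℓ_k(t) (t - v_k)| ≤ L ρ`, which controls the sum, and
`|P_z(t)| ≤ Λ ‖z‖_∞` controls the product.
-/

section

open Lagrange Set

variable {ι : Type*} [DecidableEq ι]

lemma eval_interpolate_eq_sum {F : Type*} [Field F] (s : Finset ι) (v r : ι → F) (t : F) :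
    (interpolate s v r).eval t = ∑ i ∈ s, r i * (Lagrange.basis s v i).eval t := by
  simp [interpolate_apply, Polynomial.eval_finsetSum]

lemma errP_eq_sum_add {n : ℕ} (v y z : Fin (n + 1) → ℝ) (c t : ℝ) :
    errP v y z t =
      ∑ k, (Lagrange.basis Finset.univ v k).eval t * (y k - c) * z k +
        (interpolate Finset.univ v z).eval t * (c - (interpolate Finset.univ v y).eval t) := by
  have sum_eq : ∑ k, (Lagrange.basis Finset.univ v k).eval t * (y k - c) * z k =
      (interpolate Finset.univ v fun k => y k * z k).eval t -
        c * (interpolate Finset.univ v z).eval t := by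
    rw [eval_interpolate_eq_sum, eval_interpolate_eq_sum, Finset.mul_sum,
      ← Finset.sum_sub_distrib]
    exact Finset.sum_congr rfl fun k _ => by ring
  rw [sum_eq, errP]
  ring

section Lipschitz

variable {f : ℝ → ℝ} {L : ℝ} {S : Set ℝ}

lemma nonneg_of_abs_sub_le_mul_abs_sub (hS : S.Nontrivial)
    (hf : ∀ s ∈ S, ∀ t ∈ S, |f s - f t| ≤ L * |s - t|) : 0 ≤ L := by
  obtain ⟨s, hs, t, ht, hst⟩ := hS
  exact nonneg_of_mul_nonneg_left ((abs_nonneg _).trans (hf s hs t ht))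
    (abs_pos.2 (sub_ne_zero.2 hst))

lemma continuousOn_of_abs_sub_le_mul_abs_sub
    (hf : ∀ s ∈ S, ∀ t ∈ S, |f s - f t| ≤ L * |s - t|) : ContinuousOn f S :=
  (LipschitzOnWith.of_dist_le' hf).continuousOn

end Lipschitz

variable [Fintype ι] {v : ι → ℝ} {a b t : ℝ}

lemma sum_abs_eval_basis_le_leb (ht : t ∈ Icc a b) :
    ∑ k, |(Lagrange.basis Finset.univ v k).eval t| ≤ leb v a b :=
  le_ciSup_set (f := fun s => ∑ k, |(Lagrange.basis Finset.univ v k).eval s|)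
    (isCompact_Icc.bddAbove_image (by fun_prop)) ht

variable [Nonempty ι]

lemma abs_eval_interpolate_le_leb_mul {z : ι → ℝ} {M : ℝ} (hz : ∀ k, |z k| ≤ M)
    (ht : t ∈ Icc a b) : |(interpolate Finset.univ v z).eval t| ≤ leb v a b * M := by
  have hM : 0 ≤ M := (abs_nonneg _).trans (hz (Classical.arbitrary ι))
  calc |(interpolate Finset.univ v z).eval t|
      = |∑ k, z k * (Lagrange.basis Finset.univ v k).eval t| := by rw [eval_interpolate_eq_sum]
    _ ≤ ∑ k, |z k * (Lagrange.basis Finset.univ v k).eval t| := Finset.abs_sum_le_sum_abs _ _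
    _ ≤ ∑ k, |(Lagrange.basis Finset.univ v k).eval t| * M := by
        gcongr with k
        rw [abs_mul, mul_comm]
        gcongr
        exact hz k
    _ = (∑ k, |(Lagrange.basis Finset.univ v k).eval t|) * M := by rw [Finset.sum_mul]
    _ ≤ leb v a b * M := by
        gcongr
        exact sum_abs_eval_basis_le_leb ht

/-- The quantity `ρ(v) = max_k sup_{t ∈ [a, b]} |ℓ_k(t) (t - v_k)|` for nodes `v` on the interval
`[a, b]`; it multiplies the Lipschitz constant in the error bound. -/
noncomputable def basisMoment (v : ι → ℝ) (a b : ℝ) : ℝ :=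
  Finset.univ.sup' Finset.univ_nonempty fun k =>
    ⨆ s : Icc a b, |(Lagrange.basis Finset.univ v k).eval (s : ℝ) * ((s : ℝ) - v k)|

lemma abs_eval_basis_mul_sub_le_basisMoment (ht : t ∈ Icc a b) (k : ι) :
    |(Lagrange.basis Finset.univ v k).eval t * (t - v k)| ≤ basisMoment v a b :=
  (le_ciSup_set (f := fun s => |(Lagrange.basis Finset.univ v k).eval s * (s - v k)|)
    (isCompact_Icc.bddAbove_image (by fun_prop)) ht).trans
    (Finset.le_sup' (fun k => ⨆ s : Icc a b,
      |(Lagrange.basis Finset.univ v k).eval (s : ℝ) * ((s : ℝ) - v k)|) (Finset.mem_univ k))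

lemma basisMoment_eq_zero_of_subsingleton (hab : (Icc a b).Subsingleton)
    (hv : ∀ k, v k ∈ Icc a b) : basisMoment v a b = 0 := by
  have sub_node_eq_zero (s : Icc a b) (k : ι) : (s : ℝ) - v k = 0 :=
    sub_eq_zero.2 (hab s.2 (hv k))
  simp [basisMoment, sub_node_eq_zero]

variable {f : ℝ → ℝ} {L : ℝ}

-- A negative `L` satisfies the Lipschitz condition on a one-point interval, where `ρ = 0`.
lemma mul_abs_eval_basis_mul_sub_le_mul_basisMoment (hv : ∀ k, v k ∈ Icc a b)
    (hf : ∀ s ∈ Icc a b, ∀ t ∈ Icc a b, |f s - f t| ≤ L * |s - t|) (ht : t ∈ Icc a b) (k : ι) :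
    L * |(Lagrange.basis Finset.univ v k).eval t * (t - v k)| ≤ L * basisMoment v a b := by
  rcases (Icc a b).subsingleton_or_nontrivial with hab | hab
  · simp [basisMoment_eq_zero_of_subsingleton hab hv, hab ht (hv k)]
  · exact mul_le_mul_of_nonneg_left (abs_eval_basis_mul_sub_le_basisMoment ht k)
      (nonneg_of_abs_sub_le_mul_abs_sub hab hf)

lemma abs_sum_basis_mul_sub_mul_le (hv : ∀ k, v k ∈ Icc a b)
    (hf : ∀ s ∈ Icc a b, ∀ t ∈ Icc a b, |f s - f t| ≤ L * |s - t|) (ht : t ∈ Icc a b)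
    (z : ι → ℝ) :
    |∑ k, (Lagrange.basis Finset.univ v k).eval t * (f (v k) - f t) * z k| ≤
      L * basisMoment v a b * ∑ k, |z k| := by
  have abs_basis_mul_sub_le (k : ι) :
      |(Lagrange.basis Finset.univ v k).eval t * (f (v k) - f t)| ≤ L * basisMoment v a b :=
    calc |(Lagrange.basis Finset.univ v k).eval t * (f (v k) - f t)|
        ≤ |(Lagrange.basis Finset.univ v k).eval t| * (L * |v k - t|) := by
          rw [abs_mul]
          gcongr
          exact hf _ (hv k) _ ht
      _ = L * |(Lagrange.basis Finset.univ v k).eval t * (t - v k)| := by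
          rw [abs_mul, abs_sub_comm (v k) t]
          ring
      _ ≤ L * basisMoment v a b := mul_abs_eval_basis_mul_sub_le_mul_basisMoment hv hf ht k
  rw [Finset.mul_sum]
  refine (Finset.abs_sum_le_sum_abs _ _).trans (Finset.sum_le_sum fun k _ => ?_)
  rw [abs_mul]
  exact mul_le_mul_of_nonneg_right (abs_basis_mul_sub_le k) (abs_nonneg _)

theorem stmt_10_general {n : ℕ} {v : Fin (n + 1) → ℝ} (hv : StrictMono v)
    (ha : a ≤ v 0) (hb : v (Fin.last n) ≤ b)
    (hf : ∀ s ∈ Icc a b, ∀ t ∈ Icc a b, |f s - f t| ≤ L * |s - t|)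
    {y : Fin (n + 1) → ℝ} (hy : ∀ k, y k = f (v k)) (z : Fin (n + 1) → ℝ) (ht : t ∈ Icc a b) :
    |errP v y z t| ≤
      L * basisMoment v a b * (∑ k, |z k|) +
      leb v a b * (Finset.univ.sup' Finset.univ_nonempty fun k => |z k|) *
        ⨆ s : Icc a b, |f (s : ℝ) - (interpolate Finset.univ v y).eval (s : ℝ)| := by
  have hmem (k : Fin (n + 1)) : v k ∈ Icc a b :=
    ⟨ha.trans (hv.monotone (Fin.zero_le k)), (hv.monotone (Fin.le_last k)).trans hb⟩
  have hfc : ContinuousOn f (Icc a b) := continuousOn_of_abs_sub_le_mul_abs_sub hf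
  have lipschitz_term := abs_sum_basis_mul_sub_mul_le hmem hf ht z
  have abs_eval_z_le : |(interpolate Finset.univ v z).eval t| ≤
      leb v a b * Finset.univ.sup' Finset.univ_nonempty fun k => |z k| :=
    abs_eval_interpolate_le_leb_mul
      (fun k => Finset.le_sup' (fun k => |z k|) (Finset.mem_univ k)) ht
  have abs_sub_eval_y_le : |f t - (interpolate Finset.univ v y).eval t| ≤
      ⨆ s : Icc a b, |f (s : ℝ) - (interpolate Finset.univ v y).eval (s : ℝ)| :=
    le_ciSup_set (f := fun s => |f s - (interpolate Finset.univ v y).eval s|)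
      (isCompact_Icc.bddAbove_image (by fun_prop)) ht
  simp only [← hy] at lipschitz_term
  rw [errP_eq_sum_add v y z (f t) t]
  refine (abs_add_le _ _).trans (add_le_add lipschitz_term ?_)
  rw [abs_mul]
  exact mul_le_mul abs_eval_z_le abs_sub_eval_y_le (abs_nonneg _)
    ((abs_nonneg _).trans abs_eval_z_le)

end

theorem stmt_10 {n : ℕ} (x xh : Fin (n + 1) → ℝ)
    (hx : StrictMono x) (hxh : StrictMono xh)
    (h0 : xh 0 = x 0) (hn : xh (Fin.last n) = x (Fin.last n))
    (hδ : (Finset.univ.sup' Finset.univ_nonempty fun k =>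
      ∑ j ∈ Finset.univ.erase k, |rjk x xh j k|) < 0.01)
    (hclose : ∀ k j i : Fin (n + 1), j ≠ i → |xh k - x k| ≤ 0.1 * |x j - x i|)
    (f : ℝ → ℝ) (L : ℝ)
    (hf : ∀ s ∈ Set.Icc (x 0) (x (Fin.last n)), ∀ t ∈ Set.Icc (x 0) (x (Fin.last n)),
      |f s - f t| ≤ L * |s - t|)
    (y : Fin (n + 1) → ℝ) (hy : ∀ k, y k = f (xh k))
    (t : ℝ) (ht : t ∈ Set.Icc (x 0) (x (Fin.last n))) :
    |errP xh y (zk x xh) t| ≤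
      L * (Finset.univ.sup' Finset.univ_nonempty fun k =>
          ⨆ s : Set.Icc (x 0) (x (Fin.last n)),
            |(Lagrange.basis Finset.univ xh k).eval (s : ℝ) * ((s : ℝ) - xh k)|) *
        (∑ k, |zk x xh k|) +
      leb xh (x 0) (x (Fin.last n)) *
        (Finset.univ.sup' Finset.univ_nonempty fun k => |zk x xh k|) *
        (⨆ s : Set.Icc (x 0) (x (Fin.last n)),
          |f (s : ℝ) - (Lagrange.interpolate Finset.univ xh y).eval (s : ℝ)|) :=
  stmt_10_general hxh h0.ge hn.le hf hy (zk x xh) ht
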